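/- Let C be a connected graph with minimum degree at least p (p ≥ 2) that contains no path on 2p+1 vertices. Then p+1 ≤ |V(C)| ≤ 2p and C contains a Hamiltonian path. -/

import Mathlib

/-- `G` contains a path on `k` vertices. -/
def containsPathOn {α : Type*} (G : SimpleGraph α) (k : ℕ) : Prop :=
  ∃ (u v : α) (w : G.Walk u v), w.IsPath ∧ w.length + 1 = k

/-!
All neighbours of the two ends of a longest path lie on the path. If the degrees of the ends add up
to more than the length of the path `x₀ x₁ ⋯ xₙ`, the pigeonhole principle gives an index `i` with
`x₀ ~ xᵢ₊₁` and `xₙ ~ xᵢ`, and then `x₀ ⋯ xᵢ xₙ xₙ₋₁ ⋯ xᵢ₊₁` is a path on the same vertices whose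
ends are adjacent. Were some vertex missed, connectedness would provide an edge leaving this cycle,
and cutting the cycle open next to that edge would give a longer path.
-/

section

open SimpleGraph

variable {V : Type*} {G : SimpleGraph V} {u v : V}

theorem containsPathOn_of_le_length {w : G.Walk u v} (hw : w.IsPath) {k : ℕ} (hk : k ≤ w.length) :
    containsPathOn G (k + 1) :=
  ⟨u, _, w.take k, hw.take k, by simp [hk]⟩

theorem encard_setOf_mem_support_le (w : G.Walk u v) :
    {x | x ∈ w.support}.encard ≤ w.length + 1 := by
  classical
  rw [← List.coe_toFinset, Set.encard_coe_eq_coe_finsetCard]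
  exact_mod_cast w.length_support ▸ w.support.toFinset_card_le

theorem encard_neighborSet_add_one_le_card (v : V) :
    (G.neighborSet v).encard + 1 ≤ ENat.card V := by
  rw [← Set.encard_insert_of_notMem (G.notMem_neighborSet_self (a := v))]
  exact Set.encard_le_card

theorem encard_neighborSet_start_le (w : G.Walk u v) (hu : ∀ x, G.Adj u x → x ∈ w.support) :
    (G.neighborSet u).encard ≤ {i | i < w.length ∧ G.Adj u (w.getVert (i + 1))}.encard := by
  refine (Set.encard_le_encard ?_).trans (Set.encard_image_le (fun i ↦ w.getVert (i + 1)) _)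
  intro x hx
  obtain ⟨j, rfl, hj⟩ := Walk.mem_support_iff_exists_getVert.1 (hu x hx)
  obtain _ | i := j
  · exact absurd w.getVert_zero.symm hx.ne
  · exact ⟨i, ⟨hj, hx⟩, rfl⟩

theorem encard_neighborSet_end_le (w : G.Walk u v) (hv : ∀ x, G.Adj v x → x ∈ w.support) :
    (G.neighborSet v).encard ≤ {i | i < w.length ∧ G.Adj v (w.getVert i)}.encard := by
  refine (Set.encard_le_encard ?_).trans (Set.encard_image_le w.getVert _)
  intro x hx
  obtain ⟨j, rfl, hj⟩ := Walk.mem_support_iff_exists_getVert.1 (hv x hx)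
  have hne : j ≠ w.length := by
    rintro rfl
    exact hx.ne w.getVert_length.symm
  exact ⟨j, ⟨hj.lt_of_ne hne, hx⟩, rfl⟩

theorem exists_start_adj_getVert_succ_and_end_adj_getVert (w : G.Walk u v)
    (hu : ∀ x, G.Adj u x → x ∈ w.support) (hv : ∀ x, G.Adj v x → x ∈ w.support)
    (hlt : w.length < (G.neighborSet u).encard + (G.neighborSet v).encard) :
    ∃ i < w.length, G.Adj u (w.getVert (i + 1)) ∧ G.Adj v (w.getVert i) := by
  set A := {i | i < w.length ∧ G.Adj u (w.getVert (i + 1))}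
  set B := {i | i < w.length ∧ G.Adj v (w.getVert i)}
  have hunion : (A ∪ B).encard ≤ w.length := by
    rw [← Set.Nat.encard_range]
    exact Set.encard_le_encard (Set.union_subset (fun _ hi ↦ hi.1) fun _ hi ↦ hi.1)
  have hinter : ¬ Disjoint A B := fun hdisj ↦ by
    have hle := add_le_add (encard_neighborSet_start_le w hu) (encard_neighborSet_end_le w hv)
    rw [← Set.encard_union_eq hdisj] at hle
    exact (hlt.trans_le (hle.trans hunion)).false
  obtain ⟨i, hiA, hiB⟩ := Set.not_disjoint_iff.1 hinter
  exact ⟨i, hiA.1, hiA.2, hiB.2⟩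

theorem exists_walk_support_perm_of_end_adj_getVert (w : G.Walk u v) {i : ℕ} (hi : i < w.length)
    (hv : G.Adj v (w.getVert i)) :
    ∃ q : G.Walk u (w.getVert (i + 1)), q.support.Perm w.support := by
  refine ⟨(w.take i).append (.cons hv.symm (w.drop (i + 1)).reverse), ?_⟩
  rw [Walk.support_append, Walk.support_cons, List.tail_cons, Walk.support_reverse,
    Walk.support_take, Walk.drop_support_eq_support_drop_min, min_eq_left hi]
  exact ((List.reverse_perm _).append_left _).trans (.of_eq (List.take_append_drop _ _))

theorem exists_walk_to_support_perm_of_end_adj_start (w : G.Walk u v) (hvu : G.Adj v u) {y : V}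
    (hy : y ∈ w.support) :
    ∃ (x : V) (q : G.Walk x y), q.support.Perm w.support := by
  classical
  have hyc : y ∈ (Walk.cons hvu w).support := List.mem_cons_of_mem _ hy
  refine ⟨_, ((Walk.cons hvu w).rotate y hyc).tail, ?_⟩
  rw [Walk.support_tail_of_not_nil _ (by simp)]
  exact ((Walk.cons hvu w).support_rotate y hyc).perm

/-- A path of maximum length among all paths of the graph, with arbitrary ends. -/
def IsLongestPath (w : G.Walk u v) : Prop :=
  w.IsPath ∧ ∀ ⦃x y : V⦄ (q : G.Walk x y), q.IsPath → q.length ≤ w.length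

theorem exists_isLongestPath [Nonempty V] {k : ℕ}
    (hk : ∀ ⦃x y : V⦄ (q : G.Walk x y), q.IsPath → q.length ≤ k) :
    ∃ (u v : V) (w : G.Walk u v), IsLongestPath w := by
  let lengths : Set ℕ := {n | ∃ (x y : V) (q : G.Walk x y), q.IsPath ∧ q.length = n}
  have hbdd : BddAbove lengths := ⟨k, by rintro _ ⟨x, y, q, hq, rfl⟩; exact hk q hq⟩
  have hne : lengths.Nonempty := ⟨0, Classical.arbitrary V, _, .nil, .nil, rfl⟩
  obtain ⟨u, v, w, hw, hmax⟩ := Nat.sSup_mem hne hbdd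
  exact ⟨u, v, w, hw, fun x y q hq ↦ hmax ▸ le_csSup hbdd ⟨x, y, q, hq, rfl⟩⟩

namespace IsLongestPath

variable {w : G.Walk u v}

theorem of_support_perm (hw : IsLongestPath w) {x y : V} {q : G.Walk x y}
    (hq : q.support.Perm w.support) : IsLongestPath q := by
  have hlen : q.length = w.length := by simpa using hq.length_eq
  exact ⟨.mk' (hq.nodup_iff.2 hw.1.support_nodup), hlen ▸ hw.2⟩

theorem reverse (hw : IsLongestPath w) : IsLongestPath w.reverse :=
  hw.of_support_perm (w.support_reverse ▸ List.reverse_perm _)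

theorem mem_support_of_end_adj (hw : IsLongestPath w) {x : V} (hx : G.Adj v x) :
    x ∈ w.support := by
  by_contra hxw
  have hle := hw.2 (w.concat hx) (hw.1.concat hxw hx)
  simp at hle

theorem mem_support_of_start_adj (hw : IsLongestPath w) {x : V} (hx : G.Adj u x) :
    x ∈ w.support := by
  simpa using hw.reverse.mem_support_of_end_adj hx

theorem mem_support_of_end_adj_start (hw : IsLongestPath w) (hG : G.Preconnected) (hvu : G.Adj v u)
    (z : V) : z ∈ w.support := by
  by_contra hz
  obtain ⟨r⟩ := hG u z
  obtain ⟨d, -, hfst, hsnd⟩ :=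
    r.exists_boundary_dart {x | x ∈ w.support} w.start_mem_support hz
  obtain ⟨x, q, hq⟩ := exists_walk_to_support_perm_of_end_adj_start w hvu hfst
  exact hsnd (hq.mem_iff.1 ((hw.of_support_perm hq).mem_support_of_end_adj d.adj))

theorem mem_support_of_length_lt_encard_add_encard (hw : IsLongestPath w) (hG : G.Preconnected)
    (hlt : w.length < (G.neighborSet u).encard + (G.neighborSet v).encard) (z : V) :
    z ∈ w.support := by
  obtain ⟨i, hi, hui, hvi⟩ := exists_start_adj_getVert_succ_and_end_adj_getVert w
    (fun _ ↦ hw.mem_support_of_start_adj) (fun _ ↦ hw.mem_support_of_end_adj) hlt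
  obtain ⟨q, hq⟩ := exists_walk_support_perm_of_end_adj_getVert w hi hvi
  exact hq.mem_iff.1 ((hw.of_support_perm hq).mem_support_of_end_adj_start hG hui.symm z)

end IsLongestPath

end

theorem component_structure_odd_path_general {V : Type*} (C : SimpleGraph V) (p : ℕ)
    (hconn : C.Connected) (hdeg : ∀ v : V, p ≤ (C.neighborSet v).encard)
    (hfree : ¬ containsPathOn C (2 * p + 1)) :
    p + 1 ≤ ENat.card V ∧ ENat.card V ≤ 2 * p ∧
      ∃ (u v : V) (w : C.Walk u v), w.IsPath ∧ ∀ x : V, x ∈ w.support := by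
  have := hconn.nonempty
  have hlt ⦃x y : V⦄ (q : C.Walk x y) (hq : q.IsPath) : q.length < 2 * p :=
    lt_of_not_ge fun hle ↦ hfree (containsPathOn_of_le_length hq hle)
  obtain ⟨u, v, w, hw⟩ := exists_isLongestPath fun x y q hq ↦ (hlt q hq).le
  have hsum : w.length < (C.neighborSet u).encard + (C.neighborSet v).encard :=
    calc (w.length : ℕ∞) < p + p := by exact_mod_cast two_mul p ▸ hlt w hw.1
      _ ≤ _ := add_le_add (hdeg u) (hdeg v)
  have hmem := hw.mem_support_of_length_lt_encard_add_encard hconn.preconnected hsum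
  refine ⟨?_, ?_, u, v, w, hw.1, hmem⟩
  · exact (add_le_add_left (hdeg u) 1).trans (encard_neighborSet_add_one_le_card u)
  · calc ENat.card V = {x | x ∈ w.support}.encard := by
          rw [Set.eq_univ_of_forall (s := {x | x ∈ w.support}) hmem, Set.encard_univ]
      _ ≤ w.length + 1 := encard_setOf_mem_support_le w
      _ ≤ 2 * p := by exact_mod_cast hlt w hw.1

theorem component_structure_odd_path {V : Type*} [Fintype V]
    (C : SimpleGraph V) [DecidableRel C.Adj] (p : ℕ) (hp : 2 ≤ p)
    (hconn : C.Connected) (hdeg : ∀ v : V, p ≤ C.degree v)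
    (hfree : ¬ containsPathOn C (2 * p + 1)) :
    p + 1 ≤ Fintype.card V ∧ Fintype.card V ≤ 2 * p ∧
      ∃ (u v : V) (w : C.Walk u v), w.IsPath ∧ ∀ x : V, x ∈ w.support := by
  have hdeg' (v : V) : p ≤ (C.neighborSet v).encard := by
    simpa only [← Set.coe_fintypeCard, C.card_neighborSet_eq_degree, Nat.cast_le] using hdeg v
  exact_mod_cast ENat.card_eq_coe_fintype_card (α := V) ▸
    component_structure_odd_path_general C p hconn hdeg' hfree
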